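/- arXiv:1903.11939 — 2 statements merged into one kernel-verified Lean document; each statement's English description precedes it below -/
import Mathlib

section
/- Let 1/2 ≤ α < 1, let c > 0 and let 0 < β < 1/2. Define u(x,t) = (1/π) ∫_0^∞ E_α((1−ξ²) t^α) cos(xξ) dξ for x ∈ ℝ and t > 0. Then u(c·t^β, t) → +∞ as t → +∞. -/
/-!
The Fourier transform of `u(·, t)` is the symbol `E_α((1 - ξ²) t ^ α)`. Up to polynomial factors
`E_α(z ^ α)` equals `e ^ z`, so for `|ξ| ≤ 1 / t` the symbol is comparable to `e ^ t`, and for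
`|ξ| ≤ 1` it is at most `e ^ (t (1 - ξ²))`. The frequencies `|ξ| ≤ 1 / t` therefore contribute at
least `e ^ t` over a power of `t` to the integral. The factor `cos (x ξ)` can only be negative when
`|ξ| ≥ 1 / |x|`, where the symbol is at most `e ^ (t - t / x²)`; for `x = O(t ^ β)` with `β < 1 / 2`
this is smaller by a factor `e ^ (-κ t ^ (1 - 2 β))` and is absorbed by the main term. The
frequencies `|ξ| > 1` contribute a bounded amount because `0 ≤ E_α(-y) ≤ 1 / (1 + y)` for `y ≥ 0`.

The last bound is inherited from the implicit Grünwald–Letnikov scheme for `∂ ^ α f = -y f`,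
`f 0 = 1`, with step `1 / n`: its `n`-th iterate tends to `E_α(-y)`, and its iterates are
nonnegative and nonincreasing because all nonconstant coefficients of `(1 - X) ^ α` are nonpositive.
-/

open Real MeasureTheory

/-- The Mittag-Leffler function `E_α(r) = ∑ r^k / Γ(1+kα)`. -/
noncomputable def mittagLeffler (α r : ℝ) : ℝ :=
  ∑' k : ℕ, r ^ k / Real.Gamma (1 + k * α)

/-- The fundamental solution of the one-dimensional time-fractional reaction-diffusion
problem `∂_t^α u − u_xx = u` with a Dirac delta initial datum (case `a = d = 1`). -/
noncomputable def fundSol (α x t : ℝ) : ℝ :=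
  (1 / π) * ∫ ξ in Set.Ioi (0 : ℝ), mittagLeffler α ((1 - ξ ^ 2) * t ^ α) * Real.cos (x * ξ)

open Filter Topology Finset

section Multichoose

lemma factorial_mul_multichoose {R : Type*} [CommRing R] [BinomialRing R] (a : R) (n : ℕ) :
    n.factorial * Ring.multichoose a n = ∏ j ∈ range n, (a + j) := by
  rw [← nsmul_eq_mul, Ring.factorial_nsmul_multichoose_eq_ascPochhammer,
    Polynomial.ascPochhammer_smeval_eq_eval]
  induction n with
  | zero => simp
  | succ n ih => rw [ascPochhammer_succ_eval, ih, prod_range_succ]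

variable {K : Type*} [Field K] [BinomialRing K]

lemma multichoose_add_one_right [CharZero K] (a : K) (n : ℕ) :
    Ring.multichoose a (n + 1) = Ring.multichoose a n * ((a + n) / (n + 1)) := by
  have hsucc := factorial_mul_multichoose a (n + 1)
  rw [prod_range_succ, ← factorial_mul_multichoose, Nat.factorial_succ] at hsucc
  push_cast at hsucc
  have hfac : (n.factorial : K) ≠ 0 := mod_cast n.factorial_ne_zero
  have hn1 : (n : K) + 1 ≠ 0 := n.cast_add_one_ne_zero
  field_simp
  exact mul_left_cancel₀ hfac (by linear_combination hsucc)

variable [LinearOrder K] [IsStrictOrderedRing K]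

lemma multichoose_nonneg {a : K} (ha : 0 ≤ a) (n : ℕ) : 0 ≤ Ring.multichoose a n := by
  induction n with
  | zero => simp
  | succ n ih => rw [multichoose_add_one_right]; positivity

lemma multichoose_neg_add_one_nonpos {a : K} (ha : 0 ≤ a) (ha1 : a ≤ 1) (n : ℕ) :
    Ring.multichoose (-a) (n + 1) ≤ 0 := by
  induction n with
  | zero => simpa using ha
  | succ n ih =>
    rw [multichoose_add_one_right]
    refine mul_nonpos_of_nonpos_of_nonneg ih (div_nonneg ?_ (by positivity))
    push_cast
    linarith [n.cast_nonneg (α := K)]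

lemma multichoose_le_pow {a : K} (ha : 1 ≤ a) (n : ℕ) : Ring.multichoose a n ≤ a ^ n := by
  induction n with
  | zero => simp
  | succ n ih =>
    rw [multichoose_add_one_right, pow_succ]
    refine mul_le_mul ih ?_ (by positivity) (by positivity)
    rw [div_le_iff₀ (by positivity)]
    linarith [le_mul_of_one_le_left n.cast_nonneg ha]

end Multichoose

section DiscreteRelaxation

open PowerSeries PowerSeries.WithPiTopology

/-- The binomial power series `(1 - X) ^ (-a)`. For `0 < α ≤ 1`, multiplication by
`(1 - X) ^ α` is the Grünwald–Letnikov discretisation of the fractional derivative `∂ ^ α`. -/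
noncomputable def negBinomialSeries {R : Type*} [CommRing R] [BinomialRing R] (a : R) : R⟦X⟧ :=
  rescale (-1) (binomialSeries R (-a))

section CommRing

variable {R : Type*} [CommRing R] [BinomialRing R]

lemma coeff_negBinomialSeries (a : R) (n : ℕ) :
    coeff n (negBinomialSeries a) = Ring.multichoose a n := by
  rw [negBinomialSeries, coeff_rescale, binomialSeries_coeff, Ring.choose_neg,
    ← Ring.multichoose_eq, Units.smul_def, ← Int.cast_negOnePow_natCast, zsmul_eq_mul, smul_eq_mul,
    mul_one, ← mul_assoc, Int.cast_negOnePow_natCast]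
  norm_cast
  simp [← mul_pow]

lemma negBinomialSeries_add (a b : R) :
    negBinomialSeries (a + b) = negBinomialSeries a * negBinomialSeries b := by
  rw [negBinomialSeries, neg_add, binomialSeries_add, map_mul, negBinomialSeries,
    negBinomialSeries]

lemma negBinomialSeries_zero : negBinomialSeries (0 : R) = 1 := by
  simp [negBinomialSeries]

lemma negBinomialSeries_neg_one : negBinomialSeries (-1 : R) = 1 - X := by
  have h := binomialSeries_nat (R := R) (A := R) 1
  rw [Nat.cast_one, pow_one] at h
  rw [negBinomialSeries, neg_neg, h, map_add, map_one, rescale_X, map_neg, map_one, neg_one_mul,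
    sub_eq_add_neg]

end CommRing

variable {α l : ℝ} {F Q : ℝ⟦X⟧}

lemma coeff_nonneg_of_mul_negBinomialSeries_add_C (hα0 : 0 ≤ α) (hα1 : α ≤ 1) (hl : 0 ≤ l)
    (hQ : ∀ n, 0 ≤ coeff n Q) (hF : F * (negBinomialSeries (-α) + C l) = Q) (n : ℕ) :
    0 ≤ coeff n F := by
  induction n using Nat.strong_induction_on with
  | _ n ih =>
    have hrec : (1 + l) * coeff n F =
        coeff n Q + ∑ p ∈ antidiagonal n, coeff p.1 F * coeff p.2 (1 - negBinomialSeries (-α)) := by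
      rw [← coeff_mul, ← map_add, ← hF, ← coeff_C_mul]
      congr 1
      rw [map_add, map_one]
      ring
    have hsum : 0 ≤ ∑ p ∈ antidiagonal n,
        coeff p.1 F * coeff p.2 (1 - negBinomialSeries (-α)) := by
      refine sum_nonneg fun ⟨i, j⟩ hij => ?_
      rw [HasAntidiagonal.mem_antidiagonal] at hij
      rw [map_sub, coeff_negBinomialSeries]
      rcases j with _ | j
      · simp
      · refine mul_nonneg (ih i (by lia)) ?_
        simpa [coeff_one] using multichoose_neg_add_one_nonpos hα0 hα1 j
    exact nonneg_of_mul_nonneg_right (by rw [hrec]; exact add_nonneg (hQ n) hsum) (by linarith)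

section Bounds

variable (hα0 : 0 ≤ α) (hα1 : α ≤ 1) (hl : 0 ≤ l)
  (hF : F * (negBinomialSeries (-α) + C l) = negBinomialSeries (1 - α))

include hα0 hα1 hl hF

lemma coeff_nonneg_of_discrete_relaxation (n : ℕ) : 0 ≤ coeff n F :=
  coeff_nonneg_of_mul_negBinomialSeries_add_C hα0 hα1 hl
    (fun n => by rw [coeff_negBinomialSeries]; exact multichoose_nonneg (by linarith) n) hF n

lemma antitone_coeff_of_discrete_relaxation : Antitone fun n => coeff n F := by
  have hW : (1 - X) * negBinomialSeries (1 - α) = negBinomialSeries (-α) := by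
    rw [← negBinomialSeries_neg_one, ← negBinomialSeries_add]
    ring_nf
  have hdiff : (1 - (1 - X) * F) * (negBinomialSeries (-α) + C l) = C l := by
    linear_combination (-(1 - X)) * hF - hW
  refine antitone_nat_of_succ_le fun n => ?_
  have h := coeff_nonneg_of_mul_negBinomialSeries_add_C hα0 hα1 hl
    (fun n => by rw [coeff_C]; split_ifs <;> simp [hl]) hdiff (n + 1)
  rw [sub_mul, one_mul, map_sub, map_sub, coeff_succ_X_mul, coeff_one,
    if_neg n.succ_ne_zero] at h
  linarith

lemma coeff_mul_le_one_of_discrete_relaxation (n : ℕ) :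
    coeff n F * (1 + l * Ring.multichoose (1 + α) n) ≤ 1 := by
  have hinv : negBinomialSeries α * negBinomialSeries (-α) = 1 := by
    rw [← negBinomialSeries_add, add_neg_cancel, negBinomialSeries_zero]
  have hint : F + C l * (negBinomialSeries α * F) = negBinomialSeries 1 := by
    rw [show (1 : ℝ) = α + (1 - α) by ring, negBinomialSeries_add, ← hF]
    linear_combination (-F) * hinv
  have hcoeff := congrArg (coeff n) hint
  rw [map_add, coeff_C_mul, coeff_negBinomialSeries, Ring.multichoose_one] at hcoeff
  have hconv : coeff n F * Ring.multichoose (1 + α) n ≤ coeff n (negBinomialSeries α * F) := by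
    rw [← coeff_negBinomialSeries, add_comm 1 α, negBinomialSeries_add, coeff_mul, coeff_mul,
      mul_sum]
    refine sum_le_sum fun ⟨i, j⟩ hij => ?_
    rw [HasAntidiagonal.mem_antidiagonal] at hij
    rw [coeff_negBinomialSeries 1, Ring.multichoose_one, mul_one, mul_comm, coeff_negBinomialSeries]
    exact mul_le_mul_of_nonneg_left
      (antitone_coeff_of_discrete_relaxation hα0 hα1 hl hF (by lia)) (multichoose_nonneg hα0 i)
  linarith [mul_le_mul_of_nonneg_left hconv hl]

end Bounds

lemma summable_pow_mul_multichoose (hα : 0 ≤ α) (hl : |l| < 1) (n : ℕ) :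
    Summable fun k : ℕ => l ^ k * Ring.multichoose (1 + k * α) n := by
  have hbig : (fun k : ℕ => Ring.multichoose (1 + k * α) n) =O[atTop]
      fun k : ℕ => ((k ^ n : ℕ) : ℝ) := by
    refine Asymptotics.IsBigO.of_bound ((1 + α) ^ n) ?_
    filter_upwards [eventually_ge_atTop 1] with k hk
    have hk : (1 : ℝ) ≤ k := mod_cast hk
    have hkα : 0 ≤ k * α := by positivity
    rw [Real.norm_of_nonneg (multichoose_nonneg (by linarith) n),
      Real.norm_of_nonneg (by positivity), Nat.cast_pow, ← mul_pow]
    refine (multichoose_le_pow (by linarith) n).trans ?_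
    gcongr
    linarith
  simpa only [mul_comm] using (summable_norm_mul_geometric_of_norm_lt_one' hl hbig).of_norm

/-- The Neumann series `∑ (-l) ^ k (1 - X) ^ (-1 - kα)` of `(1 - X) ^ (α - 1) / ((1 - X) ^ α + l)`,
summed coefficientwise: the generating function of the implicit Grünwald–Letnikov scheme for
`∂ ^ α f = -l f`, `f 0 = 1`. -/
noncomputable def relaxationSeries (α l : ℝ) : ℝ⟦X⟧ :=
  PowerSeries.mk fun n => ∑' k : ℕ, (-l) ^ k * Ring.multichoose (1 + k * α) n

lemma hasSum_relaxationSeries (hα : 0 ≤ α) (hl : |l| < 1) :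
    HasSum (fun k : ℕ => C ((-l) ^ k) * negBinomialSeries (1 + k * α)) (relaxationSeries α l) := by
  rw [hasSum_iff_hasSum_coeff]
  intro n
  simp only [coeff_C_mul, coeff_negBinomialSeries, relaxationSeries, coeff_mk]
  exact (summable_pow_mul_multichoose hα (by rwa [abs_neg]) n).hasSum

lemma relaxationSeries_mul (hα : 0 ≤ α) (hl : |l| < 1) :
    relaxationSeries α l * (negBinomialSeries (-α) + C l) = negBinomialSeries (1 - α) := by
  have hsum := hasSum_relaxationSeries hα hl
  have hmul := hsum.mul_right (negBinomialSeries (-α))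
  have hshift : ∀ k : ℕ, C ((-l) ^ (k + 1)) * negBinomialSeries (1 + (k + 1 : ℕ) * α) *
      negBinomialSeries (-α) = C (-l) * (C ((-l) ^ k) * negBinomialSeries (1 + k * α)) := by
    intro k
    rw [mul_assoc, ← negBinomialSeries_add, pow_succ', map_mul, mul_assoc,
      show 1 + ((k + 1 : ℕ) : ℝ) * α + -α = 1 + k * α by push_cast; ring]
  have htail := (hasSum_nat_add_iff' 1).2 hmul
  simp only [hshift, sum_range_one, pow_zero, map_one, one_mul, Nat.cast_zero, zero_mul,
    add_zero, ← negBinomialSeries_add] at htail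
  have heq := htail.unique (hsum.mul_left (C (-l)))
  rw [map_neg] at heq
  linear_combination heq

end DiscreteRelaxation

section GammaLimit

/-- Euler's sequence `n ^ (-x) (1 + x) ⋯ (n + x) / n!` for `1 / Γ(1 + x)`, normalised so that it
is antitone in `n`. -/
noncomputable def invGammaSeq (x : ℝ) (n : ℕ) : ℝ :=
  (n : ℝ) ^ (-x) * Ring.multichoose (1 + x) n

lemma invGammaSeq_nonneg {x : ℝ} (hx : 0 ≤ x) (n : ℕ) : 0 ≤ invGammaSeq x n :=
  mul_nonneg (by positivity) (multichoose_nonneg (by positivity) n)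

lemma one_add_div_le_rpow {x y : ℝ} (hx : 0 ≤ x) (hy : 0 < y) :
    1 + x / (y + 1) ≤ ((y + 1) / y) ^ x := by
  have hlog : 1 / (y + 1) ≤ log ((y + 1) / y) := by
    refine le_of_eq_of_le ?_ (one_sub_inv_le_log_of_pos (by positivity))
    field_simp
    ring
  calc 1 + x / (y + 1) ≤ exp (x / (y + 1)) := by linarith [add_one_le_exp (x / (y + 1))]
    _ = exp (1 / (y + 1) * x) := by ring_nf
    _ ≤ exp (log ((y + 1) / y) * x) := by gcongr
    _ = ((y + 1) / y) ^ x := (rpow_def_of_pos (by positivity) x).symm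

lemma invGammaSeq_antitoneOn {x : ℝ} (hx : 0 ≤ x) : AntitoneOn (invGammaSeq x) (Set.Ici 1) := by
  refine antitoneOn_of_succ_le Set.ordConnected_Ici fun n _ hn _ => ?_
  have hn0 : (0 : ℝ) < n := mod_cast (Set.mem_Ici.1 hn)
  have hratio : (1 + x + n) / ((n : ℝ) + 1) ≤ (((n : ℝ) + 1) / n) ^ x := by
    refine le_of_eq_of_le ?_ (one_add_div_le_rpow hx hn0)
    field_simp
    ring
  have hm := multichoose_nonneg (add_nonneg zero_le_one hx) n
  rw [Order.succ_eq_add_one, invGammaSeq, multichoose_add_one_right, invGammaSeq]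
  calc ((n + 1 : ℕ) : ℝ) ^ (-x) * (Ring.multichoose (1 + x) n * ((1 + x + n) / (n + 1)))
      ≤ ((n : ℝ) + 1) ^ (-x) * (Ring.multichoose (1 + x) n * (((n : ℝ) + 1) / n) ^ x) := by
        push_cast
        gcongr
    _ = (n : ℝ) ^ (-x) * Ring.multichoose (1 + x) n := by
        rw [div_rpow (by positivity) hn0.le, rpow_neg (by positivity), rpow_neg hn0.le]
        field_simp

lemma tendsto_invGammaSeq {x : ℝ} (hx : -1 < x) :
    Tendsto (invGammaSeq x) atTop (𝓝 (Gamma (1 + x))⁻¹) := by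
  have hΓ : Gamma (1 + x) ≠ 0 := (Gamma_pos_of_pos (by linarith)).ne'
  have hlim := (tendsto_natCast_div_add_atTop (1 + x)).mul
    ((GammaSeq_tendsto_Gamma (1 + x)).inv₀ hΓ)
  rw [one_mul] at hlim
  refine hlim.congr' ?_
  filter_upwards [eventually_gt_atTop 0] with n hn
  have hn0 : (0 : ℝ) < n := mod_cast hn
  have hnx : (n : ℝ) + (1 + x) ≠ 0 := by linarith
  rw [GammaSeq, invGammaSeq, prod_range_succ, ← factorial_mul_multichoose, rpow_add hn0,
    rpow_one, rpow_neg hn0.le]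
  field_simp
  ring

lemma Gamma_one_add_le_factorial {s : ℝ} {n : ℕ} (hns : n ≤ s) (hsn : s ≤ n + 1) :
    Gamma (1 + s) ≤ (n + 1).factorial := by
  have hle := convexOn_Gamma.le_max_of_mem_Icc
    (x := (n : ℝ) + 1) (y := (n + 1 : ℕ) + 1) (z := 1 + s)
    (Set.mem_Ioi.2 (by positivity)) (Set.mem_Ioi.2 (by positivity))
    ⟨by linarith, by push_cast; linarith⟩
  rw [Gamma_nat_eq_factorial, Gamma_nat_eq_factorial] at hle
  exact hle.trans (max_le (mod_cast Nat.factorial_le n.le_succ) le_rfl)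

lemma rpow_mul_exp_neg_le_Gamma {s x : ℝ} (hs : 0 ≤ s) (hx : 0 ≤ x) :
    x ^ s * exp (-x) ≤ Gamma (1 + s) := by
  have hint : IntegrableOn (fun t : ℝ => exp (-t) * t ^ s) (Set.Ioi 0) := by
    simpa using GammaIntegral_convergent (show 0 < 1 + s by linarith)
  calc x ^ s * exp (-x) = ∫ t in Set.Ioi x, exp (-t) * x ^ s := by
        rw [integral_mul_const, integral_exp_neg_Ioi, mul_comm]
    _ ≤ ∫ t in Set.Ioi x, exp (-t) * t ^ s := by
        refine setIntegral_mono_on ((integrableOn_exp_neg_Ioi x).mul_const _)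
          (hint.mono_set (Set.Ioi_subset_Ioi hx)) measurableSet_Ioi fun t ht => ?_
        have := (Set.mem_Ioi.1 ht).le
        gcongr
    _ ≤ ∫ t in Set.Ioi 0, exp (-t) * t ^ s :=
        setIntegral_mono_set hint
          ((ae_restrict_iff' measurableSet_Ioi).2 (Eventually.of_forall fun t ht =>
            mul_nonneg (exp_pos _).le (rpow_nonneg (Set.mem_Ioi.1 ht).le s)))
          (Set.Ioi_subset_Ioi hx).eventuallyLE
    _ = Gamma (1 + s) := by rw [Gamma_eq_integral (by linarith), add_sub_cancel_left]

end GammaLimit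

section MittagLefflerNeg

open PowerSeries

variable {α y : ℝ}

lemma eventually_abs_div_rpow_lt_one (hα : 0 < α) (y : ℝ) :
    ∀ᶠ n : ℕ in atTop, |y / (n : ℝ) ^ α| < 1 := by
  have hlim := (tendsto_rpow_atTop hα).comp tendsto_natCast_atTop_atTop
  filter_upwards [hlim.eventually_gt_atTop |y|] with n hn
  rw [abs_div, abs_of_nonneg (a := (n : ℝ) ^ α) (by positivity)]
  exact (div_lt_one ((abs_nonneg y).trans_lt hn)).2 hn

lemma div_rpow_pow_mul_multichoose (α y : ℝ) (n k : ℕ) :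
    (y / (n : ℝ) ^ α) ^ k * Ring.multichoose (1 + k * α) n = y ^ k * invGammaSeq (k * α) n := by
  rw [invGammaSeq, rpow_neg n.cast_nonneg, mul_comm (k : ℝ) α, rpow_mul_natCast n.cast_nonneg,
    div_pow, div_eq_mul_inv, mul_assoc]

lemma tendsto_coeff_relaxationSeries (hα : 0 < α) (y : ℝ) :
    Tendsto (fun n : ℕ => coeff n (relaxationSeries α (y / (n : ℝ) ^ α))) atTop
      (𝓝 (mittagLeffler α (-y))) := by
  obtain ⟨N, hN, hN1⟩ :=
    ((eventually_abs_div_rpow_lt_one hα |y|).and (eventually_ge_atTop 1)).exists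
  simp_rw [relaxationSeries, coeff_mk, ← neg_div, div_rpow_pow_mul_multichoose, mittagLeffler,
    div_eq_mul_inv]
  refine tendsto_tsum_of_dominated_convergence
    (bound := fun k : ℕ => |y| ^ k * invGammaSeq (k * α) N) ?_ (fun k => ?_) ?_
  · simp_rw [← div_rpow_pow_mul_multichoose]
    exact summable_pow_mul_multichoose hα.le hN N
  · exact (tendsto_invGammaSeq (neg_one_lt_zero.trans_le (by positivity))).const_mul _
  · filter_upwards [eventually_ge_atTop N] with n hn k
    have hkα : 0 ≤ k * α := by positivity
    rw [norm_mul, norm_pow, norm_neg, Real.norm_eq_abs,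
      Real.norm_of_nonneg (invGammaSeq_nonneg hkα n)]
    gcongr
    exact invGammaSeq_antitoneOn hkα hN1 (hN1.trans hn) hn

lemma mittagLeffler_neg_nonneg (hα0 : 0 < α) (hα1 : α ≤ 1) (hy : 0 ≤ y) :
    0 ≤ mittagLeffler α (-y) := by
  refine ge_of_tendsto (tendsto_coeff_relaxationSeries hα0 y) ?_
  filter_upwards [eventually_abs_div_rpow_lt_one hα0 y] with n hn
  exact coeff_nonneg_of_discrete_relaxation hα0.le hα1 (by positivity)
    (relaxationSeries_mul hα0.le hn) n

lemma mittagLeffler_neg_mul_le_one (hα0 : 0 < α) (hα1 : α ≤ 1) (hy : 0 ≤ y) :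
    mittagLeffler α (-y) * (1 + y / Gamma (1 + α)) ≤ 1 := by
  have hlim := (tendsto_coeff_relaxationSeries hα0 y).mul
    (((tendsto_invGammaSeq (neg_one_lt_zero.trans hα0)).const_mul y).const_add 1)
  refine le_of_tendsto hlim ?_
  filter_upwards [eventually_abs_div_rpow_lt_one hα0 y] with n hn
  have hscale := div_rpow_pow_mul_multichoose α y n 1
  simp only [pow_one, Nat.cast_one, one_mul] at hscale
  rw [← hscale]
  exact coeff_mul_le_one_of_discrete_relaxation hα0.le hα1 (by positivity)
    (relaxationSeries_mul hα0.le hn) n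

lemma mittagLeffler_neg_le (hα0 : 0 < α) (hα1 : α ≤ 1) (hy : 0 ≤ y) :
    mittagLeffler α (-y) ≤ (1 + y)⁻¹ := by
  have hΓ0 : 0 < Gamma (1 + α) := Gamma_pos_of_pos (by linarith)
  have hΓ1 : Gamma (1 + α) ≤ 1 := by
    simpa using Gamma_one_add_le_factorial (n := 0) (by simpa using hα0.le) (by simpa using hα1)
  rw [← one_div, le_div_iff₀ (by positivity)]
  refine le_trans ?_ (mittagLeffler_neg_mul_le_one hα0 hα1 hy)
  gcongr
  · exact mittagLeffler_neg_nonneg hα0 hα1 hy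
  · exact le_div_self hy hΓ0 hΓ1

end MittagLefflerNeg

section MittagLefflerGrowth

variable {α x r X : ℝ}

lemma pow_div_Gamma_le (hα : 0 ≤ α) (hX : 0 < X) (hr : 0 ≤ r) (k : ℕ) :
    r ^ k / Gamma (1 + k * α) ≤ exp X * (r / X ^ α) ^ k := by
  have hpow : X ^ (k * α) = (X ^ α) ^ k := by rw [mul_comm, rpow_mul_natCast hX.le]
  have hΓ := rpow_mul_exp_neg_le_Gamma (s := k * α) (by positivity) hX.le
  calc r ^ k / Gamma (1 + k * α) ≤ r ^ k / (X ^ (k * α) * exp (-X)) := by gcongr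
    _ = exp X * (r / X ^ α) ^ k := by
      rw [hpow, exp_neg, div_pow]
      field_simp

lemma summable_mittagLeffler (hα : 0 < α) (r : ℝ) :
    Summable fun k : ℕ => r ^ k / Gamma (1 + k * α) := by
  obtain ⟨X, hrX, hX⟩ :=
    (((tendsto_rpow_atTop hα).eventually_gt_atTop |r|).and (eventually_gt_atTop 0)).exists
  have hgeom := (summable_geometric_of_lt_one (r := |r| / X ^ α) (by positivity)
    ((div_lt_one (by positivity)).2 hrX)).mul_left (exp X)
  refine hgeom.of_norm_bounded fun k => ?_
  rw [norm_div, norm_pow, Real.norm_eq_abs,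
    Real.norm_of_nonneg (Gamma_pos_of_pos (by positivity)).le]
  exact pow_div_Gamma_le hα.le hX (abs_nonneg r) k

lemma mittagLeffler_le (hα : 0 < α) (hX : 0 < X) (hr : 0 ≤ r) (hrX : r < X ^ α) :
    mittagLeffler α r ≤ exp X / (1 - r / X ^ α) := by
  have hgeom := hasSum_geometric_of_lt_one (r := r / X ^ α) (by positivity)
    ((div_lt_one (by positivity)).2 hrX)
  rw [div_eq_mul_inv]
  exact hasSum_le (pow_div_Gamma_le hα.le hX hr) (summable_mittagLeffler hα r).hasSum
    (hgeom.mul_left (exp X))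

lemma mittagLeffler_rpow_le (hα0 : 0 < α) (hα1 : α ≤ 1) (hx : 0 ≤ x) :
    mittagLeffler α (x ^ α) ≤ (x + 1) / α * exp (x + 1) := by
  have hratio : x ^ α / (x + 1) ^ α ≤ 1 - α / (x + 1) := by
    have hbernoulli := rpow_one_add_le_one_add_mul_self (s := -1 / (x + 1))
      (by rw [le_div_iff₀ (by positivity)]; linarith) hα0.le hα1
    rw [← div_rpow hx (by positivity)]
    convert hbernoulli using 1
    · congr 1
      field_simp
      ring
    · ring
  have : 0 < α / (x + 1) := by positivity
  calc mittagLeffler α (x ^ α) ≤ exp (x + 1) / (1 - x ^ α / (x + 1) ^ α) :=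
        mittagLeffler_le hα0 (by positivity) (by positivity) (by gcongr; linarith)
    _ ≤ exp (x + 1) / (α / (x + 1)) := by gcongr; linarith
    _ = (x + 1) / α * exp (x + 1) := by field_simp

lemma mittagLeffler_monotoneOn (hα : 0 < α) : MonotoneOn (mittagLeffler α) (Set.Ici 0) := by
  refine fun r hr s _ hrs =>
    (summable_mittagLeffler hα r).tsum_le_tsum (fun k => ?_) (summable_mittagLeffler hα s)
  rw [Set.mem_Ici] at hr
  have : 0 < Gamma (1 + k * α) := Gamma_pos_of_pos (by positivity)
  gcongr

lemma continuous_mittagLeffler (hα : 0 < α) : Continuous (mittagLeffler α) := by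
  refine continuous_iff_continuousAt.2 fun r => ?_
  have hcont : ContinuousOn (mittagLeffler α) (Metric.ball 0 (|r| + 1)) := by
    refine continuousOn_tsum (fun k => by fun_prop) (summable_mittagLeffler hα (|r| + 1))
      fun k s hs => ?_
    have hΓ : 0 < Gamma (1 + k * α) := Gamma_pos_of_pos (by positivity)
    rw [norm_div, norm_pow, Real.norm_of_nonneg hΓ.le]
    gcongr
    exact (mem_ball_zero_iff.1 hs).le
  exact hcont.continuousAt (Metric.isOpen_ball.mem_nhds (by simp))

lemma mittagLeffler_nonneg (hα0 : 0 < α) (hα1 : α ≤ 1) (r : ℝ) : 0 ≤ mittagLeffler α r := by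
  rcases le_total 0 r with hr | hr
  · exact tsum_nonneg fun k => div_nonneg (by positivity) (Gamma_pos_of_pos (by positivity)).le
  · simpa using mittagLeffler_neg_nonneg hα0 hα1 (neg_nonneg.2 hr)

lemma ceil_div_mul_mem_Ico (hα : 0 < α) (n : ℕ) :
    (⌈n / α⌉₊ : ℝ) * α ∈ Set.Ico (n : ℝ) (n + α) := by
  refine ⟨(div_le_iff₀ hα).1 (Nat.le_ceil _), ?_⟩
  calc (⌈n / α⌉₊ : ℝ) * α < (n / α + 1) * α := by
        gcongr
        exact Nat.ceil_lt_add_one (by positivity)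
    _ = n + α := by field_simp

lemma ceil_div_strictMono (hα0 : 0 < α) (hα1 : α ≤ 1) : StrictMono fun n : ℕ => ⌈n / α⌉₊ := by
  refine strictMono_nat_of_lt_succ fun n => ?_
  have hlt : (⌈n / α⌉₊ : ℝ) * α < ⌈(n + 1 : ℕ) / α⌉₊ * α := by
    refine (ceil_div_mul_mem_Ico hα0 n).2.trans_le (le_trans ?_ (ceil_div_mul_mem_Ico hα0 _).1)
    push_cast
    linarith
  exact_mod_cast lt_of_mul_lt_mul_right hlt hα0.le

lemma hasSum_pow_succ_div_factorial (x : ℝ) :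
    HasSum (fun n : ℕ => x ^ (n + 1) / (n + 1).factorial) (exp x - 1) := by
  have h := (hasSum_nat_add_iff' 1).2 (NormedSpace.expSeries_div_hasSum_exp x)
  rw [← congrFun exp_eq_exp_ℝ x] at h
  simpa using h

-- Only the terms with index `⌈n / α⌉₊` are kept; each is at least `x ^ n / (n + 1)!`.
lemma exp_sub_one_le_mul_mittagLeffler_rpow (hα0 : 0 < α) (hα1 : α ≤ 1) (hx : 1 ≤ x) :
    exp x - 1 ≤ x * mittagLeffler α (x ^ α) := by
  have hx0 : 0 ≤ x := zero_le_one.trans hx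
  have hinj := (ceil_div_strictMono hα0 hα1).injective
  have hterm (n : ℕ) : x ^ n / (n + 1).factorial ≤
      (x ^ α) ^ ⌈n / α⌉₊ / Gamma (1 + (⌈n / α⌉₊ : ℕ) * α) := by
    obtain ⟨hle, hlt⟩ := ceil_div_mul_mem_Ico hα0 n
    have hpow : x ^ n ≤ (x ^ α) ^ ⌈n / α⌉₊ := by
      rw [← rpow_natCast, ← rpow_mul_natCast hx0, mul_comm α]
      exact rpow_le_rpow_of_exponent_le hx hle
    exact div_le_div₀ (by positivity) hpow (Gamma_pos_of_pos (by positivity))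
      (Gamma_one_add_le_factorial hle (by linarith))
  have hsum := summable_mittagLeffler hα0 (x ^ α)
  calc exp x - 1 ≤ x * ∑' n : ℕ, (x ^ α) ^ ⌈n / α⌉₊ / Gamma (1 + (⌈n / α⌉₊ : ℕ) * α) := by
        refine hasSum_le (fun n => ?_) (hasSum_pow_succ_div_factorial x)
          ((hsum.comp_injective hinj).hasSum.mul_left x)
        rw [pow_succ', mul_div_assoc]
        exact mul_le_mul_of_nonneg_left (hterm n) hx0
    _ ≤ x * mittagLeffler α (x ^ α) := by
        refine mul_le_mul_of_nonneg_left (tsum_comp_le_tsum_of_inj hsum (fun k => ?_) hinj) hx0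
        exact div_nonneg (by positivity) (Gamma_pos_of_pos (by positivity)).le

end MittagLefflerGrowth

section Symbol

/-- The Fourier transform `E_α((1 - ξ²) t ^ α)` of `u(·, t)` at the frequency `ξ`. -/
noncomputable def fundSolSymbol (α t ξ : ℝ) : ℝ :=
  mittagLeffler α ((1 - ξ ^ 2) * t ^ α)

variable {α t ξ : ℝ}

lemma continuous_fundSolSymbol (hα : 0 < α) (t : ℝ) : Continuous (fundSolSymbol α t) :=
  (continuous_mittagLeffler hα).comp (by fun_prop)

lemma fundSolSymbol_nonneg (hα0 : 0 < α) (hα1 : α ≤ 1) (t ξ : ℝ) : 0 ≤ fundSolSymbol α t ξ :=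
  mittagLeffler_nonneg hα0 hα1 _

lemma fundSolSymbol_le_rpow_neg_two (hα0 : 0 < α) (hα1 : α ≤ 1) (ht : 1 ≤ t) (hξ : 1 < ξ) :
    fundSolSymbol α t ξ ≤ ξ ^ (-2 : ℝ) := by
  have hgap : 0 ≤ ξ ^ 2 - 1 := by nlinarith
  have hdecay := mittagLeffler_neg_le hα0 hα1 (y := (ξ ^ 2 - 1) * t ^ α) (by positivity)
  calc fundSolSymbol α t ξ = mittagLeffler α (-((ξ ^ 2 - 1) * t ^ α)) := by
        rw [fundSolSymbol]
        ring_nf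
    _ ≤ (ξ ^ 2)⁻¹ := hdecay.trans (by
        gcongr
        linarith [le_mul_of_one_le_right hgap (one_le_rpow ht hα0.le)])
    _ = ξ ^ (-2 : ℝ) := by
        rw [rpow_neg (by linarith), rpow_two]

lemma fundSolSymbol_le (hα0 : 0 < α) (hα1 : α ≤ 1) (ht : 0 ≤ t) (hξ : ξ ^ 2 ≤ 1) :
    fundSolSymbol α t ξ ≤ (t * (1 - ξ ^ 2) + 1) / α * exp (t * (1 - ξ ^ 2) + 1) := by
  have hξ0 : 0 ≤ 1 - ξ ^ 2 := by linarith
  refine le_trans ?_ (mittagLeffler_rpow_le hα0 hα1 (x := t * (1 - ξ ^ 2)) (by positivity))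
  refine mittagLeffler_monotoneOn hα0 (Set.mem_Ici.2 (by positivity))
    (Set.mem_Ici.2 (by positivity)) ?_
  rw [mul_rpow ht hξ0, mul_comm]
  gcongr
  exact self_le_rpow_of_le_one hξ0 (by linarith [sq_nonneg ξ]) hα1

lemma sub_inv_rpow_le (hα0 : 0 < α) (hα1 : α ≤ 1) (ht : α⁻¹ ≤ t) :
    (t - α⁻¹) ^ α ≤ (1 - t⁻¹) * t ^ α := by
  have ht0 : 0 < t := (inv_pos.2 hα0).trans_le ht
  have hinv : (α * t)⁻¹ ≤ 1 := inv_le_one_of_one_le₀ ((inv_le_iff_one_le_mul₀' hα0).1 ht)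
  have hbernoulli := rpow_one_add_le_one_add_mul_self (s := -(α * t)⁻¹) (by linarith) hα0.le hα1
  calc (t - α⁻¹) ^ α = (1 + -(α * t)⁻¹) ^ α * t ^ α := by
        rw [← mul_rpow (by linarith) ht0.le]
        congr 1
        field_simp
        ring
    _ ≤ (1 + α * -(α * t)⁻¹) * t ^ α := by gcongr
    _ = (1 - t⁻¹) * t ^ α := by
        field_simp
        ring

lemma le_fundSolSymbol (hα0 : 0 < α) (hα1 : α ≤ 1) (ht : α⁻¹ + 1 ≤ t) (hξ : ξ ^ 2 ≤ t⁻¹) :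
    (exp (t - α⁻¹) - 1) / t ≤ fundSolSymbol α t ξ := by
  have hα : 0 < α⁻¹ := inv_pos.2 hα0
  have ht0 : 0 < t := by linarith
  have harg : (t - α⁻¹) ^ α ≤ (1 - ξ ^ 2) * t ^ α :=
    (sub_inv_rpow_le hα0 hα1 (by linarith)).trans (by gcongr)
  have hbase : 0 ≤ (t - α⁻¹) ^ α := rpow_nonneg (by linarith) α
  rw [div_le_iff₀' ht0]
  calc exp (t - α⁻¹) - 1 ≤ (t - α⁻¹) * mittagLeffler α ((t - α⁻¹) ^ α) :=
        exp_sub_one_le_mul_mittagLeffler_rpow hα0 hα1 (by linarith)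
    _ ≤ t * fundSolSymbol α t ξ :=
        mul_le_mul (by linarith) (mittagLeffler_monotoneOn hα0 hbase (hbase.trans harg) harg)
          (mittagLeffler_nonneg hα0 hα1 _) ht0.le

end Symbol

section Splitting

variable {f : ℝ → ℝ}

lemma integrableOn_Ioi_of_abs_le_rpow {a c : ℝ} (ha : a < -1) (hc : 0 < c)
    (hf : AEStronglyMeasurable f (volume.restrict (Set.Ioi c)))
    (hfa : ∀ ξ, c < ξ → |f ξ| ≤ ξ ^ a) : IntegrableOn f (Set.Ioi c) :=
  (integrableOn_Ioi_rpow_of_lt ha hc).mono' hf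
    ((ae_restrict_iff' measurableSet_Ioi).2 (Eventually.of_forall hfa))

lemma abs_integral_Ioi_le_of_abs_le_rpow {a c : ℝ} (ha : a < -1) (hc : 0 < c)
    (hfa : ∀ ξ, c < ξ → |f ξ| ≤ ξ ^ a) : |∫ ξ in Set.Ioi c, f ξ| ≤ -c ^ (a + 1) / (a + 1) := by
  rw [← integral_Ioi_rpow_of_lt ha hc]
  exact norm_integral_le_of_norm_le (f := f) (integrableOn_Ioi_rpow_of_lt ha hc)
    ((ae_restrict_iff' measurableSet_Ioi).2 (Eventually.of_forall hfa))

lemma sub_mul_le_intervalIntegral {a b m : ℝ} (hab : a ≤ b) (hf : IntervalIntegrable f volume a b)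
    (hm : ∀ ξ ∈ Set.Icc a b, m ≤ f ξ) : (b - a) * m ≤ ∫ ξ in a..b, f ξ := by
  rw [← smul_eq_mul, ← intervalIntegral.integral_const]
  exact intervalIntegral.integral_mono_on hab intervalIntegrable_const hf hm

lemma le_integral_Ioi_of_split {δ A B : ℝ} (hf : Continuous f) (hδ0 : 0 ≤ δ) (hδ1 : δ ≤ 1)
    (hB : 0 ≤ B) (hlow : ∀ ξ ∈ Set.Icc 0 δ, A ≤ f ξ) (hmid : ∀ ξ ∈ Set.Icc δ 1, -B ≤ f ξ)
    (htail : ∀ ξ, 1 < ξ → |f ξ| ≤ ξ ^ (-2 : ℝ)) :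
    δ * A - B - 1 ≤ ∫ ξ in Set.Ioi 0, f ξ := by
  have hint := hf.intervalIntegrable (μ := volume)
  have hint_tail := integrableOn_Ioi_of_abs_le_rpow (by norm_num) one_pos
    hf.aestronglyMeasurable htail
  have hlow_le := sub_mul_le_intervalIntegral hδ0 (hint 0 δ) hlow
  have hmid_le := sub_mul_le_intervalIntegral hδ1 (hint δ 1) hmid
  have htail_le := abs_integral_Ioi_le_of_abs_le_rpow (by norm_num) one_pos htail
  norm_num at htail_le
  calc δ * A - B - 1 ≤ (δ - 0) * A + (1 - δ) * -B + -1 := by nlinarith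
    _ ≤ (∫ ξ in 0..δ, f ξ) + (∫ ξ in δ..1, f ξ) + ∫ ξ in Set.Ioi 1, f ξ :=
        add_le_add (add_le_add hlow_le hmid_le) (abs_le.1 htail_le).1
    _ = ∫ ξ in Set.Ioi 0, f ξ := by
        rw [intervalIntegral.integral_add_adjacent_intervals (hint 0 δ) (hint δ 1),
          intervalIntegral.integral_interval_add_Ioi' (hint 0 1) hint_tail]

end Splitting

section LowerBound

variable {α x y t ξ : ℝ}

lemma abs_mul_cos_le (hξ : 0 ≤ ξ) : |ξ * Real.cos x| ≤ ξ := by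
  rw [abs_mul, abs_of_nonneg hξ]
  exact mul_le_of_le_one_right hξ (abs_cos_le_one x)

lemma one_half_le_cos {θ : ℝ} (hθ : |θ| ≤ 1) : 1 / 2 ≤ Real.cos θ := by
  have := (sq_le_one_iff_abs_le_one θ).2 hθ
  linarith [one_sub_sq_div_two_le_cos (x := θ)]

lemma le_fundSolSymbol_mul_cos (hα0 : 0 < α) (hα1 : α ≤ 1) (ht : α⁻¹ + 1 ≤ t) (hx : |x| ≤ t)
    (hξ : ξ ∈ Set.Icc 0 t⁻¹) :
    (exp (t - α⁻¹) - 1) / t * (1 / 2) ≤ fundSolSymbol α t ξ * Real.cos (x * ξ) := by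
  have hα : 0 < α⁻¹ := inv_pos.2 hα0
  have ht1 : 1 ≤ t := by linarith
  have hξ1 : ξ ≤ 1 := hξ.2.trans (inv_le_one_of_one_le₀ ht1)
  have hphase : |x * ξ| ≤ 1 := by
    rw [abs_mul, abs_of_nonneg hξ.1, ← mul_inv_cancel₀ (show t ≠ 0 by linarith)]
    exact mul_le_mul hx hξ.2 hξ.1 (by linarith)
  exact mul_le_mul (le_fundSolSymbol hα0 hα1 ht (by nlinarith [hξ.1, hξ.2]))
    (one_half_le_cos hphase) (by norm_num) (fundSolSymbol_nonneg hα0 hα1 t ξ)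

-- The cosine can only be negative when `1 < y * |ξ|`, and there the symbol is already small.
lemma neg_le_fundSolSymbol_mul_cos (hα0 : 0 < α) (hα1 : α ≤ 1) (ht : 1 ≤ t) (hy : 0 < y)
    (hxy : |x| ≤ y) (hξ : ξ ^ 2 ≤ 1) :
    -(2 * t / α * exp (t - t / y ^ 2 + 1)) ≤ fundSolSymbol α t ξ * Real.cos (x * ξ) := by
  have hS := fundSolSymbol_nonneg hα0 hα1 t ξ
  rcases le_or_gt |x * ξ| 1 with hphase | hphase
  · have hcos : 0 ≤ Real.cos (x * ξ) := by linarith [one_half_le_cos hphase]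
    exact (neg_nonpos.2 (by positivity)).trans (mul_nonneg hS hcos)
  · have hyξ : 1 ≤ y ^ 2 * ξ ^ 2 := by
      rw [← mul_pow, one_le_sq_iff_one_le_abs, abs_mul, abs_of_pos hy]
      rw [abs_mul] at hphase
      exact hphase.le.trans (by gcongr)
    have hdecay : t * (1 - ξ ^ 2) ≤ t - t / y ^ 2 := by
      have : t / y ^ 2 ≤ t * ξ ^ 2 := by
        rw [div_le_iff₀ (by positivity)]
        nlinarith
      linarith
    have : 0 ≤ t * (1 - ξ ^ 2) := mul_nonneg (by linarith) (by linarith)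
    have hsize : t * (1 - ξ ^ 2) + 1 ≤ 2 * t := by nlinarith [sq_nonneg ξ]
    refine (neg_le_neg ?_).trans (neg_le_of_abs_le (abs_mul_cos_le hS))
    exact (fundSolSymbol_le hα0 hα1 (by linarith) hξ).trans (by gcongr)

lemma le_fundSol (hα0 : 0 < α) (hα1 : α ≤ 1) (ht : α⁻¹ + 1 ≤ t) (hy : 0 < y) (hxy : |x| ≤ y)
    (hyt : y ≤ t) :
    1 / π * ((exp (t - α⁻¹) - 1) / (2 * t ^ 2) - 2 * t / α * exp (t - t / y ^ 2 + 1) - 1) ≤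
      fundSol α x t := by
  have hα : 0 < α⁻¹ := inv_pos.2 hα0
  have ht1 : 1 ≤ t := by linarith
  have ht0 : 0 < t⁻¹ := by positivity
  have hcont : Continuous fun ξ => fundSolSymbol α t ξ * Real.cos (x * ξ) :=
    (continuous_fundSolSymbol hα0 t).mul (by fun_prop)
  have hsplit := le_integral_Ioi_of_split hcont ht0.le (inv_le_one_of_one_le₀ ht1)
    (B := 2 * t / α * exp (t - t / y ^ 2 + 1)) (by positivity)
    (fun ξ hξ => le_fundSolSymbol_mul_cos hα0 hα1 ht (hxy.trans hyt) hξ)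
    (fun ξ hξ => neg_le_fundSolSymbol_mul_cos hα0 hα1 ht1 hy hxy
      (pow_le_one₀ (ht0.le.trans hξ.1) hξ.2))
    (fun ξ hξ => (abs_mul_cos_le (fundSolSymbol_nonneg hα0 hα1 t ξ)).trans
      (fundSolSymbol_le_rpow_neg_two hα0 hα1 ht1 hξ))
  refine mul_le_mul_of_nonneg_left (le_of_eq_of_le ?_ hsplit) (by positivity)
  field_simp

end LowerBound

section Limit

lemma tendsto_pow_mul_exp_neg_mul_rpow {b γ : ℝ} (hb : 0 < b) (hγ : 0 < γ) (n : ℕ) :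
    Tendsto (fun t : ℝ => t ^ n * exp (-b * t ^ γ)) atTop (𝓝 0) := by
  refine ((tendsto_rpow_mul_exp_neg_mul_atTop_nhds_zero (n / γ) b hb).comp
    (tendsto_rpow_atTop hγ)).congr' ?_
  filter_upwards [eventually_ge_atTop 0] with t ht
  rw [Function.comp_apply, ← rpow_mul ht, mul_div_cancel₀ _ hγ.ne', rpow_natCast]

lemma tendsto_exp_div_sub_mul_exp_atTop {a b γ K : ℝ} (hb : 0 < b) (hγ : 0 < γ) :
    Tendsto (fun t : ℝ =>
      (exp (t - a) - 1) / (2 * t ^ 2) - K * t * exp (t - b * t ^ γ + 1) - 1) atTop atTop := by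
  have hone : Tendsto (fun t : ℝ => exp (-t)) atTop (𝓝 0) := tendsto_exp_neg_atTop_nhds_zero
  have hsmall := (tendsto_pow_mul_exp_neg_mul_rpow hb hγ 3).const_mul (K * exp 1)
  have hfactor := ((hone.const_sub (exp (-a))).div_const 2).sub hsmall
  rw [sub_zero, mul_zero, sub_zero] at hfactor
  have hlim := (tendsto_exp_div_pow_atTop 2).atTop_mul_pos (by positivity) hfactor
  refine (tendsto_atTop_add_const_right atTop (-1) hlim).congr' ?_
  filter_upwards [eventually_gt_atTop 0] with t ht
  rw [sub_eq_add_neg t a, sub_eq_add_neg t, exp_add, exp_add, exp_add, exp_neg t, neg_mul]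
  field_simp
  ring

end Limit

theorem fundSol_tendsto_atTop_general {α β : ℝ} {x : ℝ → ℝ} (hα0 : 0 < α) (hα1 : α ≤ 1)
    (hβ : β < 1 / 2) (hx : x =O[atTop] fun t => t ^ β) :
    Tendsto (fun t => fundSol α (x t) t) atTop atTop := by
  obtain ⟨C, hC, hxC⟩ := hx.exists_pos
  have hlim := (tendsto_exp_div_sub_mul_exp_atTop (a := α⁻¹) (b := (C ^ 2)⁻¹) (γ := 1 - 2 * β)
    (K := 2 / α) (by positivity) (by linarith)).const_mul_atTop (r := 1 / π) (by positivity)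
  refine tendsto_atTop_mono' _ ?_ hlim
  have hCt : ∀ᶠ t : ℝ in atTop, C ≤ t ^ (1 - β) :=
    (tendsto_rpow_atTop (by linarith)).eventually_ge_atTop C
  filter_upwards [hxC.bound, hCt, eventually_ge_atTop (α⁻¹ + 1), eventually_gt_atTop 0]
    with t hxt hCt hαt ht
  rw [Real.norm_eq_abs, Real.norm_of_nonneg (by positivity)] at hxt
  have hyt : C * t ^ β ≤ t := by
    calc C * t ^ β ≤ t ^ (1 - β) * t ^ β := by gcongr
      _ = t := by rw [← rpow_add ht, sub_add_cancel, rpow_one]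
  have hty : t / (C * t ^ β) ^ 2 = (C ^ 2)⁻¹ * t ^ (1 - 2 * β) := by
    rw [rpow_sub ht, rpow_one, mul_comm 2 β, rpow_mul ht.le, rpow_two]
    field_simp
  rw [← hty, div_mul_eq_mul_div 2 α t]
  exact le_fundSol hα0 hα1 hαt (by positivity) hxt hyt

theorem fundSol_tendsto_atTop (α c β : ℝ) (hα : 1 / 2 ≤ α) (hα1 : α < 1)
    (hc : 0 < c) (hβ : 0 < β) (hβ' : β < 1 / 2) :
    Filter.Tendsto (fun t : ℝ => fundSol α (c * t ^ β) t) Filter.atTop Filter.atTop :=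
  fundSol_tendsto_atTop_general (by linarith) hα1.le hβ' (Asymptotics.isBigO_const_mul_self c _ _)
end

section
/- For every real r ≥ 0, the Mittag-Leffler function of order 1/2 has the closed form E_{1/2}(r) = (1 + (2/√π) ∫_0^r e^{−s²} ds) · e^{r²}. -/
open Real

/-!
The even terms of `E_{1/2}(r)` sum to `exp (r ^ 2)`. For the odd terms, expand the integrand of
`exp (r ^ 2) * ∫ s in 0..r, exp (-s ^ 2) = ∫ s in 0..r, exp (r ^ 2 - s ^ 2)` as a power series in
`r ^ 2 - s ^ 2` and integrate termwise: the integrals of `(r ^ 2 - s ^ 2) ^ n` are beta integrals,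
proportional to `n! * r ^ (2 * n + 1) / Γ(n + 3 / 2)`.
-/

lemma integral_sq_sub_sq_pow_succ (r : ℝ) (n : ℕ) :
    (2 * n + 3) * ∫ s in (0 : ℝ)..r, (r ^ 2 - s ^ 2) ^ (n + 1) =
      2 * (n + 1) * r ^ 2 * ∫ s in (0 : ℝ)..r, (r ^ 2 - s ^ 2) ^ n := by
  have hderiv (s : ℝ) : HasDerivAt (fun s ↦ s * (r ^ 2 - s ^ 2) ^ (n + 1))
      ((2 * n + 3) * (r ^ 2 - s ^ 2) ^ (n + 1) -
        2 * (n + 1) * r ^ 2 * (r ^ 2 - s ^ 2) ^ n) s := by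
    refine ((hasDerivAt_id' s).fun_mul
      (((hasDerivAt_pow 2 s).const_sub (r ^ 2)).fun_pow (n + 1))).congr_deriv ?_
    push_cast [Nat.add_sub_cancel]
    ring
  have hFTC := intervalIntegral.integral_eq_sub_of_hasDerivAt (a := 0) (b := r)
    (fun s _ ↦ hderiv s) (Continuous.intervalIntegrable (by fun_prop) _ _)
  rw [intervalIntegral.integral_sub (Continuous.intervalIntegrable (by fun_prop) _ _)
    (Continuous.intervalIntegrable (by fun_prop) _ _),
    intervalIntegral.integral_const_mul, intervalIntegral.integral_const_mul,
    sub_self, zero_pow n.succ_ne_zero, mul_zero, zero_mul, sub_zero] at hFTC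
  exact sub_eq_zero.1 hFTC

lemma integral_sq_sub_sq_pow (r : ℝ) (n : ℕ) :
    ∫ s in (0 : ℝ)..r, (r ^ 2 - s ^ 2) ^ n =
      √π / 2 * n.factorial * r ^ (2 * n + 1) / Gamma (n + 3 / 2) := by
  induction n with
  | zero =>
    have hGamma : Gamma (3 / 2) = √π / 2 := by
      rw [show (3 / 2 : ℝ) = 1 / 2 + 1 by norm_num, Gamma_add_one (by norm_num),
        Gamma_one_half_eq]
      ring
    simp only [pow_zero, intervalIntegral.integral_const, smul_eq_mul, Nat.factorial_zero,
      Nat.cast_one, Nat.cast_zero, mul_zero, zero_add, pow_one, mul_one, sub_zero, hGamma]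
    field_simp
  | succ n ih =>
    have hGamma : Gamma ((n + 1 : ℕ) + 3 / 2) = (n + 3 / 2) * Gamma (n + 3 / 2) := by
      rw [← Gamma_add_one (by positivity)]
      push_cast
      ring_nf
    have hGamma_ne : Gamma ((n : ℝ) + 3 / 2) ≠ 0 := (Gamma_pos_of_pos (by positivity)).ne'
    have hrec := integral_sq_sub_sq_pow_succ r n
    rw [ih] at hrec
    rw [hGamma, eq_div_iff (mul_ne_zero (by positivity) hGamma_ne), Nat.factorial_succ]
    field_simp at hrec ⊢
    push_cast
    linear_combination hrec

lemma hasSum_pow_div_factorial (x : ℝ) :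
    HasSum (fun n : ℕ ↦ x ^ n / n.factorial) (exp x) := by
  simpa only [exp_eq_exp_ℝ] using NormedSpace.expSeries_div_hasSum_exp x

lemma hasSum_integral_pow_div_factorial {f : ℝ → ℝ} {a b : ℝ}
    (hf : ContinuousOn f (Set.uIcc a b)) :
    HasSum (fun n : ℕ ↦ (∫ s in a..b, f s ^ n) / n.factorial) (∫ s in a..b, exp (f s)) := by
  obtain ⟨C, hC⟩ := isCompact_uIcc.exists_bound_of_continuousOn hf
  have hf_uIoc : ContinuousOn f (Set.uIoc a b) := hf.mono Set.uIoc_subset_uIcc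
  have hbound (n : ℕ) (s : ℝ) (hs : s ∈ Set.uIoc a b) :
      ‖f s ^ n / n.factorial‖ ≤ C ^ n / n.factorial := by
    rw [norm_div, norm_pow, RCLike.norm_natCast]
    gcongr
    exact hC s (Set.uIoc_subset_uIcc hs)
  simp only [← intervalIntegral.integral_div]
  refine intervalIntegral.hasSum_integral_of_dominated_convergence
    (fun n _ ↦ C ^ n / n.factorial) (fun n ↦ ?_) (fun n ↦ .of_forall (hbound n))
    (.of_forall fun _ _ ↦ (hasSum_pow_div_factorial C).summable) intervalIntegrable_const
    (.of_forall fun s _ ↦ hasSum_pow_div_factorial (f s))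
  exact ((hf_uIoc.pow n).div_const _).aestronglyMeasurable measurableSet_uIoc

lemma hasSum_pow_even_div_Gamma (r : ℝ) :
    HasSum (fun n : ℕ ↦ r ^ (2 * n) / Gamma (n + 1)) (exp (r ^ 2)) := by
  simpa only [Gamma_nat_eq_factorial, pow_mul] using hasSum_pow_div_factorial (r ^ 2)

lemma hasSum_pow_odd_div_Gamma (r : ℝ) :
    HasSum (fun n : ℕ ↦ r ^ (2 * n + 1) / Gamma (n + 3 / 2))
      (2 / √π * ((∫ s in (0 : ℝ)..r, exp (-s ^ 2)) * exp (r ^ 2))) := by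
  have hintegral : ∫ s in (0 : ℝ)..r, exp (r ^ 2 - s ^ 2) =
      (∫ s in (0 : ℝ)..r, exp (-s ^ 2)) * exp (r ^ 2) := by
    simp only [sub_eq_neg_add, exp_add, intervalIntegral.integral_mul_const]
  rw [← hintegral]
  refine ((hasSum_integral_pow_div_factorial (by fun_prop)).mul_left (2 / √π)).congr_fun
    fun n ↦ ?_
  rw [integral_sq_sub_sq_pow]
  field_simp

theorem mittagLeffler_half_closed_form_general (r : ℝ) :
    mittagLeffler (1 / 2) r =
      (1 + (2 / √π) * ∫ s in (0 : ℝ)..r, exp (-s ^ 2)) * exp (r ^ 2) := by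
  have heven : HasSum (fun n : ℕ ↦ r ^ (2 * n) / Gamma (1 + (2 * n : ℕ) * (1 / 2)))
      (exp (r ^ 2)) := by
    convert hasSum_pow_even_div_Gamma r using 4
    push_cast
    ring
  have hodd : HasSum (fun n : ℕ ↦ r ^ (2 * n + 1) / Gamma (1 + (2 * n + 1 : ℕ) * (1 / 2)))
      (2 / √π * ((∫ s in (0 : ℝ)..r, exp (-s ^ 2)) * exp (r ^ 2))) := by
    convert hasSum_pow_odd_div_Gamma r using 4
    push_cast
    ring
  have hsum := HasSum.even_add_odd (f := fun k : ℕ ↦ r ^ k / Gamma (1 + k * (1 / 2))) heven hodd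
  rw [mittagLeffler, hsum.tsum_eq]
  ring

theorem mittagLeffler_half_closed_form (r : ℝ) (hr : 0 ≤ r) :
    mittagLeffler (1 / 2) r =
      (1 + (2 / Real.sqrt π) * ∫ s in (0 : ℝ)..r, Real.exp (-s ^ 2)) * Real.exp (r ^ 2) :=
  mittagLeffler_half_closed_form_general r
end
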